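/- There exists a_0 ∈ ℤ^r such that P_{a_0} is an n-dimensional simple lattice polytope having exactly r distinct facets; precisely: (i) P_{a_0} is compact with nonempty interior; (ii) every extreme point of P_{a_0} lies in ℤ^n; (iii) every extreme point x of P_{a_0} satisfies ⟨v_i, x⟩ = -(a_0)_i for exactly n indices i ∈ {1, …, r}; and (iv) for every i, the face F_i = {x ∈ P_{a_0} : ⟨v_i, x⟩ = -(a_0)_i} is nonempty of affine dimension n − 1, and F_i ≠ F_j whenever i ≠ j. -/

import Mathlib

/-!
Call `a` *admissible* (`Admissible v a`) if every `a i` is positive and, for `i ≠ j`, the point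
`-(a i / |v_i|²) v_i` of the `i`-th hyperplane satisfies the `j`-th inequality strictly; call `a`
*generic* (`Generic v a`) if at any point `x` the normals of the inequalities that are equalities
at `x` are linearly independent.

* Admissible parameters form an open set. It contains `a i = |v_i|`, by the strict case of the
  Cauchy-Schwarz inequality: distinct primitive vectors are not positive multiples of each other
  (`eq_of_pos_proportional`).
* The set of generic parameters contains a finite intersection of complements of
  hyperplanes, one for each linearly dependent subset of the normals, hence contains a dense open set.

So there is a rational parameter with both properties, and both are invariant under positive
scaling. Scaling by a common denominator and by `|detProd v|`, a common multiple of the nonzero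
`n × n` minors of the matrix of the `v_i`, gives `a₀`. Admissibility produces the facets and an
interior point. At an extreme point the active normals span `ℝ^n`, and by genericity they are
independent, so there are exactly `n` of them; the point then solves a square integer system whose right-hand
side is divisible by the determinant, and Cramer's rule makes it integral. Compactness holds since
each coordinate functional and its negative are nonnegative combinations of the `v_i`.
-/

/-- The pairing `⟨v_i, x⟩ = ∑ j, v_i(j) * x(j)` between an integer vector and a real vector. -/
def dotv {n r : ℕ} (v : Fin r → Fin n → ℤ) (i : Fin r) (x : Fin n → ℝ) : ℝ :=
  ∑ j, (v i j : ℝ) * x j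

/-- The polyhedron `P_a = {x ∈ ℝ^n : ⟨v_i, x⟩ ≥ -a_i for all i}`. -/
def Pa {n r : ℕ} (v : Fin r → Fin n → ℤ) (a : Fin r → ℝ) : Set (Fin n → ℝ) :=
  {x | ∀ i, -a i ≤ dotv v i x}

/-- The space of polytope presentations `PP_H = {a : P_a ≠ ∅}`. -/
def PPH {n r : ℕ} (v : Fin r → Fin n → ℤ) : Set (Fin r → ℝ) :=
  {a | (Pa v a).Nonempty}

/-- An integer vector is primitive if the gcd of its coordinates is 1. -/
def IsPrimitiveVec {n : ℕ} (u : Fin n → ℤ) : Prop :=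
  Finset.univ.gcd u = 1

/-- The convex cone generated by the `v_i` is all of `ℝ^n`. -/
def PosSpans {n r : ℕ} (v : Fin r → Fin n → ℤ) : Prop :=
  ∀ x : Fin n → ℝ, ∃ c : Fin r → ℝ, (∀ i, 0 ≤ c i) ∧
    ∀ j, x j = ∑ i, c i * (v i j : ℝ)

open Topology Filter

/-! ### The functionals `⟨v_i, ·⟩` -/

section Linear

variable {n r : ℕ}

/-- The functional `⟨v_i, ·⟩` as a linear map. -/
def dotL (v : Fin r → Fin n → ℤ) (i : Fin r) : (Fin n → ℝ) →ₗ[ℝ] ℝ where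
  toFun := dotv v i
  map_add' x y := by simp [dotv, mul_add, Finset.sum_add_distrib]
  map_smul' c x := by
    simp only [dotv, Pi.smul_apply, smul_eq_mul, RingHom.id_apply, Finset.mul_sum]
    exact Finset.sum_congr rfl fun _ _ => by ring

/-- The vector `v_i`, seen in `ℝ^n`. -/
def realVec (v : Fin r → Fin n → ℤ) (i : Fin r) : Fin n → ℝ := fun k => (v i k : ℝ)

lemma dotv_add (v : Fin r → Fin n → ℤ) (i : Fin r) (x y : Fin n → ℝ) :
    dotv v i (x + y) = dotv v i x + dotv v i y := (dotL v i).map_add x y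

lemma dotv_smul (v : Fin r → Fin n → ℤ) (i : Fin r) (c : ℝ) (x : Fin n → ℝ) :
    dotv v i (c • x) = c * dotv v i x := (dotL v i).map_smul c x

lemma continuous_dotv (v : Fin r → Fin n → ℤ) (i : Fin r) : Continuous (dotv v i) := by
  unfold dotv; fun_prop

/-- A small move in a direction `y` that is orthogonal to every active normal stays inside the
polyhedron, in both senses. -/
lemma exists_perturb (v : Fin r → Fin n → ℤ) (a : Fin r → ℝ) {x y : Fin n → ℝ}
    (hx : x ∈ Pa v a) (hy : ∀ i, dotv v i y = 0 ∨ -a i < dotv v i x) :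
    ∃ ε : ℝ, 0 < ε ∧ x + ε • y ∈ Pa v a ∧ x + (-ε) • y ∈ Pa v a := by
  have key : ∀ i, ∀ᶠ ε in 𝓝 (0 : ℝ),
      -a i ≤ dotv v i (x + ε • y) ∧ -a i ≤ dotv v i (x + (-ε) • y) := by
    intro i
    simp only [dotv_add, dotv_smul]
    rcases hy i with h | h
    · simp only [h, mul_zero, add_zero]
      exact Eventually.of_forall fun _ => ⟨hx i, hx i⟩
    · have h1 : Continuous fun ε : ℝ => dotv v i x + ε * dotv v i y := by fun_prop
      have h2 : Continuous fun ε : ℝ => dotv v i x + -ε * dotv v i y := by fun_prop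
      have e1 := (h1.tendsto 0).eventually (lt_mem_nhds (a := -a i) (by simpa using h))
      have e2 := (h2.tendsto 0).eventually (lt_mem_nhds (a := -a i) (by simpa using h))
      filter_upwards [e1, e2] with ε g1 g2 using ⟨g1.le, g2.le⟩
  have hall := (eventually_all.2 key).filter_mono (nhdsWithin_le_nhds (s := Set.Ioi 0))
  obtain ⟨ε, h, hε⟩ := (hall.and self_mem_nhdsWithin).exists
  exact ⟨ε, hε, fun i => (h i).1, fun i => (h i).2⟩

end Linear

/-! ### Primitive vectors -/

section Primitive

variable {n r : ℕ}

/-- Primitive integer vectors that are positive multiples of each other are equal. -/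
lemma eq_of_pos_proportional {u w : Fin n → ℤ} (hu : IsPrimitiveVec u) (hw : IsPrimitiveVec w)
    {α β : ℝ} (hα : 0 < α) (hβ : 0 < β) (h : ∀ k, α * u k = β * w k) : u = w := by
  have cross : ∀ k l, u k * w l = w k * u l := by
    intro k l
    have : (u k * w l : ℝ) = w k * u l := by
      have h1 := h k
      have h2 := h l
      have : α * β * (u k * w l : ℝ) = α * β * (w k * u l) := by
        linear_combination β * w l * h1 - β * w k * h2
      exact mul_left_cancel₀ (by positivity) this
    exact_mod_cast this
  funext k
  have habs : |u k| = |w k| := by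
    have h1 : Finset.univ.gcd (fun l => u k * w l) = |u k| := by
      rw [Finset.gcd_mul_left, show Finset.univ.gcd (fun l => w l) = 1 from hw, mul_one,
        Int.abs_eq_normalize]
    have h2 : Finset.univ.gcd (fun l => w k * u l) = |w k| := by
      rw [Finset.gcd_mul_left, show Finset.univ.gcd (fun l => u l) = 1 from hu, mul_one,
        Int.abs_eq_normalize]
    rw [← h1, ← h2]
    simp only [cross k]
  rcases abs_eq_abs.1 habs with h' | h'
  · exact h'
  · have hk := h k
    rw [h'] at hk
    push_cast at hk
    have : (α + β) * (w k : ℝ) = 0 := by linarith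
    have hw0 : (w k : ℝ) = 0 := by
      rcases mul_eq_zero.1 this with h | h
      · linarith
      · exact h
    have : w k = 0 := by exact_mod_cast hw0
    rw [h', this, neg_zero]

lemma IsPrimitiveVec.ne_zero {u : Fin n → ℤ} (hu : IsPrimitiveVec u) : u ≠ 0 := by
  rintro rfl
  have : Finset.univ.gcd (0 : Fin n → ℤ) = 0 := Finset.gcd_eq_zero_iff.2 fun _ _ => rfl
  rw [IsPrimitiveVec, this] at hu
  exact zero_ne_one hu

lemma dotv_self_pos {v : Fin r → Fin n → ℤ} {i : Fin r} (hi : IsPrimitiveVec (v i)) :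
    0 < dotv v i (realVec v i) := by
  obtain ⟨k, hk⟩ := Function.ne_iff.1 hi.ne_zero
  refine Finset.sum_pos' (fun _ _ => mul_self_nonneg _) ⟨k, Finset.mem_univ _, ?_⟩
  have : (v i k : ℝ) ≠ 0 := by exact_mod_cast hk
  exact mul_self_pos.2 this

end Primitive

/-! ### Admissible parameters -/

section Admissible

variable {n r : ℕ}

/-- Every `a i` is positive, and for `i ≠ j` the point `-(a i / |v_i|²) v_i` satisfies the `j`-th
inequality strictly; the denominator `|v_i|²` is cleared. -/
def Admissible (v : Fin r → Fin n → ℤ) (a : Fin r → ℝ) : Prop :=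
  (∀ i, 0 < a i) ∧
    ∀ i j, i ≠ j → a i * dotv v j (realVec v i) < a j * dotv v i (realVec v i)

lemma isOpen_admissible (v : Fin r → Fin n → ℤ) : IsOpen {a | Admissible v a} := by
  simp only [Admissible, Set.ofPred_and, Set.ofPred_forall]
  refine (isOpen_iInter_of_finite fun i => ?_).inter
    (isOpen_iInter_of_finite fun i => isOpen_iInter_of_finite fun j =>
      isOpen_iInter_of_finite fun _ => ?_)
  · exact isOpen_lt continuous_const (continuous_apply i)
  · exact isOpen_lt (by fun_prop) (by fun_prop)

lemma Admissible.smul {v : Fin r → Fin n → ℤ} {a : Fin r → ℝ} (h : Admissible v a) {c : ℝ}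
    (hc : 0 < c) : Admissible v (c • a) := by
  refine ⟨fun i => mul_pos hc (h.1 i), fun i j hij => ?_⟩
  have := mul_lt_mul_of_pos_left (h.2 i j hij) hc
  simpa [mul_assoc] using this

/-- Taking `a i = |v_i|`, the polytope circumscribed about the unit ball, is admissible. -/
lemma exists_admissible {v : Fin r → Fin n → ℤ} (hdist : Function.Injective v)
    (hprim : ∀ i, IsPrimitiveVec (v i)) : ∃ a, Admissible v a := by
  let w : Fin r → EuclideanSpace ℝ (Fin n) := fun i => WithLp.toLp 2 (realVec v i)
  have hin : ∀ i j, inner ℝ (w i) (w j) = dotv v j (realVec v i) := by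
    intro i j
    simp [w, dotv, realVec, PiLp.inner_apply]
  have hsq : ∀ i, dotv v i (realVec v i) = ‖w i‖ * ‖w i‖ := fun i => by
    rw [← hin, real_inner_self_eq_norm_mul_norm]
  have hpos : ∀ i, 0 < ‖w i‖ := by
    intro i
    have h := dotv_self_pos (hprim i)
    rw [hsq] at h
    exact (norm_nonneg _).lt_of_ne fun h0 => by rw [← h0] at h; simp at h
  refine ⟨fun i => ‖w i‖, hpos, fun i j hij => ?_⟩
  have hlt : dotv v j (realVec v i) < ‖w i‖ * ‖w j‖ := by
    rw [← hin]
    refine (real_inner_le_norm _ _).lt_of_ne fun he => hij (hdist ?_)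
    rw [inner_eq_norm_mul_iff_real] at he
    refine eq_of_pos_proportional (hprim i) (hprim j) (hpos j) (hpos i) fun k => ?_
    have := congrArg (fun z : EuclideanSpace ℝ (Fin n) => z k) he
    simpa [w, realVec] using this
  show ‖w i‖ * _ < ‖w j‖ * _
  rw [hsq]
  nlinarith [mul_lt_mul_of_pos_left hlt (hpos i)]

/-- Each hyperplane contains a point satisfying all the other inequalities strictly. -/
lemma Admissible.exists_facet_point {v : Fin r → Fin n → ℤ} {a : Fin r → ℝ}
    (h : Admissible v a) (hprim : ∀ i, IsPrimitiveVec (v i)) (i : Fin r) :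
    ∃ x, dotv v i x = -a i ∧ ∀ j, i ≠ j → -a j < dotv v j x := by
  have hq := dotv_self_pos (hprim i)
  refine ⟨(-(a i / dotv v i (realVec v i))) • realVec v i, ?_, fun j hij => ?_⟩
  · rw [dotv_smul]; field_simp
  · rw [dotv_smul, neg_mul, neg_lt_neg_iff, div_mul_eq_mul_div, div_lt_iff₀ hq]
    exact h.2 i j hij

end Admissible

/-! ### Generic parameters -/

section Generic

variable {n r : ℕ}

/-- The normals of the hyperplanes through any given point are linearly independent. -/
def Generic (v : Fin r → Fin n → ℤ) (a : Fin r → ℝ) : Prop :=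
  ∀ (S : Finset (Fin r)) (x : Fin n → ℝ), (∀ i ∈ S, dotv v i x = -a i) →
    LinearIndependent ℝ fun i : S => realVec v i

lemma Generic.smul {v : Fin r → Fin n → ℤ} {a : Fin r → ℝ} (h : Generic v a) {c : ℝ}
    (hc : 0 < c) : Generic v (c • a) := by
  intro S x hx
  refine h S (c⁻¹ • x) fun i hi => ?_
  rw [dotv_smul, hx i hi, Pi.smul_apply, smul_eq_mul]
  field_simp

/-- For a dependent set `S` of normals, with relation `∑ g i • v_i = 0`, a point on all the
hyperplanes indexed by `S` forces `∑ g i * a i = 0`. -/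
lemma exists_open_dense_generic (v : Fin r → Fin n → ℤ) (S : Finset (Fin r)) :
    ∃ O : Set (Fin r → ℝ), IsOpen O ∧ Dense O ∧
      ∀ a ∈ O, ∀ x : Fin n → ℝ, (∀ i ∈ S, dotv v i x = -a i) →
        LinearIndependent ℝ fun i : S => realVec v i := by
  by_cases hS : LinearIndependent ℝ fun i : S => realVec v i
  · exact ⟨Set.univ, isOpen_univ, dense_univ, fun _ _ _ _ => hS⟩
  obtain ⟨g, hg, i₀, hi₀⟩ := Fintype.not_linearIndependent_iff.1 hS
  let φ : (Fin r → ℝ) →ₗ[ℝ] ℝ := ∑ i : S, g i • LinearMap.proj (i : Fin r)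
  have hφ : ∀ a, φ a = ∑ i : S, g i * a i := fun a => by simp [φ]
  refine ⟨(LinearMap.ker φ : Set (Fin r → ℝ))ᶜ, ?_, ?_, ?_⟩
  · exact (Submodule.closed_of_finiteDimensional _).isOpen_compl
  · rw [← interior_eq_empty_iff_dense_compl]
    by_contra hne
    have htop := Submodule.eq_top_of_nonempty_interior' (LinearMap.ker φ)
      (Set.nonempty_iff_ne_empty.2 hne)
    have : φ (Pi.single (i₀ : Fin r) 1) = 0 := by
      have : Pi.single (i₀ : Fin r) (1 : ℝ) ∈ LinearMap.ker φ := by rw [htop]; trivial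
      exact this
    rw [hφ, Finset.sum_eq_single i₀] at this
    · simp at this; exact hi₀ this
    · intro b _ hb
      rw [Pi.single_eq_of_ne (fun h => hb (Subtype.ext h)), mul_zero]
    · simp
  · intro a ha x hx
    refine absurd ?_ ha
    show φ a = 0
    rw [hφ]
    have h0 : ∑ i : S, g i * dotv v i x = 0 := by
      have : ∑ j, (∑ i : S, g i • realVec v i) j * x j = 0 := by rw [hg]; simp
      rw [← this]
      simp only [Finset.sum_apply, Pi.smul_apply, smul_eq_mul, dotv, realVec, Finset.mul_sum,
        Finset.sum_mul]
      rw [Finset.sum_comm]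
      simp only [mul_assoc]
    have h1 : ∑ i : S, g i * dotv v i x = -∑ i : S, g i * a i := by
      rw [← Finset.sum_neg_distrib]
      exact Finset.sum_congr rfl fun i _ => by rw [hx i i.2]; ring
    linarith

lemma exists_rat_admissible_generic {v : Fin r → Fin n → ℤ} (hdist : Function.Injective v)
    (hprim : ∀ i, IsPrimitiveVec (v i)) :
    ∃ q : Fin r → ℚ, Admissible v (fun i => (q i : ℝ)) ∧ Generic v (fun i => (q i : ℝ)) := by
  choose O hO hd hgen using exists_open_dense_generic v
  have hopen : IsOpen ({a | Admissible v a} ∩ ⋂ S, O S) :=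
    (isOpen_admissible v).inter (isOpen_iInter_of_finite hO)
  have hne : ({a | Admissible v a} ∩ ⋂ S, O S).Nonempty :=
    (dense_iInter_of_isOpen hO hd).inter_open_nonempty _ (isOpen_admissible v)
      (exists_admissible hdist hprim)
  have hdr : DenseRange (Pi.map fun (_ : Fin r) (q : ℚ) => (q : ℝ)) :=
    DenseRange.piMap fun _ => Rat.denseRange_cast
  obtain ⟨q, hq⟩ := hdr.exists_mem_open hopen hne
  exact ⟨q, hq.1, fun S x hx => hgen S _ (Set.mem_iInter.1 hq.2 S) x hx⟩

end Generic

/-! ### Minors and integral solutions -/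

section Integrality

variable {n r : ℕ}

open Classical in
/-- The product of the nonzero determinants with rows `v_{f 0}, …, v_{f (n-1)}`, over all
`f : Fin n → Fin r`. -/
noncomputable def detProd (v : Fin r → Fin n → ℤ) : ℤ :=
  ∏ f : Fin n → Fin r,
    if (Matrix.of fun k => v (f k)).det = 0 then 1 else (Matrix.of fun k => v (f k)).det

lemma detProd_ne_zero (v : Fin r → Fin n → ℤ) : detProd v ≠ 0 := by
  unfold detProd
  refine Finset.prod_ne_zero_iff.2 fun f _ => ?_
  split_ifs with h
  · exact one_ne_zero
  · exact h

lemma det_dvd_detProd (v : Fin r → Fin n → ℤ) (f : Fin n → Fin r)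
    (h : (Matrix.of fun k => v (f k)).det ≠ 0) :
    (Matrix.of fun k => v (f k)).det ∣ detProd v := by
  have := Finset.dvd_prod_of_mem (fun f : Fin n → Fin r =>
    if (Matrix.of fun k => v (f k)).det = 0 then 1 else (Matrix.of fun k => v (f k)).det)
    (Finset.mem_univ f)
  simp only [if_neg h] at this
  unfold detProd
  convert this

/-- An integer square system whose right-hand side is divisible by the determinant has only
integral solutions. -/
lemma integral_of_mulVec {A : Matrix (Fin n) (Fin n) ℤ} (hA : A.det ≠ 0) {b : Fin n → ℤ}
    (hb : ∀ k, A.det ∣ b k) {x : Fin n → ℝ} (hx : ∀ k, ∑ j, (A k j : ℝ) * x j = b k) (j : Fin n) :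
    ∃ m : ℤ, x j = m := by
  choose c hc using hb
  have hx' : (A.map (Int.cast : ℤ → ℝ)).mulVec x = fun k => (b k : ℝ) := funext hx
  have hdet : (A.map (Int.cast : ℤ → ℝ)).det = (A.det : ℝ) :=
    ((Int.castRingHom ℝ).map_det A).symm
  have hadj : (A.map (Int.cast : ℤ → ℝ)).adjugate = A.adjugate.map (Int.cast : ℤ → ℝ) :=
    ((Int.castRingHom ℝ).map_adjugate A).symm
  refine ⟨∑ k, A.adjugate j k * c k, ?_⟩
  have h1 := congrFun (congrArg (A.map (Int.cast : ℤ → ℝ)).adjugate.mulVec hx') j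
  rw [Matrix.mulVec_mulVec, Matrix.adjugate_mul, Matrix.smul_mulVec, Matrix.one_mulVec,
    Pi.smul_apply, smul_eq_mul, hdet, hadj] at h1
  have h2 : (A.det : ℝ) * x j = A.det * ((∑ k, A.adjugate j k * c k : ℤ) : ℝ) := by
    rw [h1]
    simp only [Matrix.mulVec, dotProduct, Matrix.map_apply]
    push_cast
    rw [Finset.mul_sum]
    refine Finset.sum_congr rfl fun k _ => ?_
    rw [hc k]
    push_cast
    ring
  exact mul_left_cancel₀ (by exact_mod_cast hA) h2

end Integrality

/-! ### Geometry of the polytope -/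

section Polytope

variable {n r : ℕ}

lemma isCompact_Pa {v : Fin r → Fin n → ℤ} (hspan : PosSpans v) (a : Fin r → ℝ) :
    IsCompact (Pa v a) := by
  have hclosed : IsClosed (Pa v a) := by
    simp only [Pa, Set.ofPred_forall]
    exact isClosed_iInter fun i => isClosed_le continuous_const (continuous_dotv v i)
  -- A linear functional is bounded below on `Pa v a`, being a nonnegative combination of the `v_i`.
  have hbd : ∀ y : Fin n → ℝ, ∃ B : ℝ, ∀ x ∈ Pa v a, B ≤ ∑ j, y j * x j := by
    intro y
    obtain ⟨c, hc, hy⟩ := hspan y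
    refine ⟨∑ i, c i * -a i, fun x hx => ?_⟩
    have : ∑ j, y j * x j = ∑ i, c i * dotv v i x := by
      simp only [hy, dotv, Finset.mul_sum, Finset.sum_mul]
      rw [Finset.sum_comm]
      simp only [mul_assoc]
    rw [this]
    exact Finset.sum_le_sum fun i _ => mul_le_mul_of_nonneg_left (hx i) (hc i)
  choose lo hlo using fun j => hbd (Pi.single j 1)
  choose up hup using fun j => hbd (Pi.single j (-1))
  refine (isCompact_Icc (a := lo) (b := fun j => -up j)).of_isClosed_subset hclosed
    fun x hx => ⟨fun j => ?_, fun j => ?_⟩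
  · simpa [Pi.single_apply] using hlo j x hx
  · have := hup j x hx
    simp [Pi.single_apply] at this
    show x j ≤ -up j
    linarith

lemma interior_nonempty_Pa (v : Fin r → Fin n → ℤ) {a : Fin r → ℝ} (ha : ∀ i, 0 < a i) :
    (interior (Pa v a)).Nonempty := by
  have hopen : IsOpen {x | ∀ i, -a i < dotv v i x} := by
    simp only [Set.ofPred_forall]
    exact isOpen_iInter_of_finite fun i => isOpen_lt continuous_const (continuous_dotv v i)
  refine ⟨0, interior_maximal (fun x hx i => (hx i).le) hopen fun i => ?_⟩
  have : dotv v i 0 = 0 := (dotL v i).map_zero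
  rw [this]
  linarith [ha i]

/-- The active normals at an extreme point span: a vector orthogonal to all of them vanishes. -/
lemma eq_zero_of_extreme {v : Fin r → Fin n → ℤ} {a : Fin r → ℝ} {x : Fin n → ℝ}
    (hx : x ∈ Set.extremePoints ℝ (Pa v a)) {y : Fin n → ℝ}
    (hy : ∀ i, dotv v i x = -a i → dotv v i y = 0) : y = 0 := by
  obtain ⟨ε, hε, h1, h2⟩ := exists_perturb v a hx.1 (y := y) fun i => by
    rcases (hx.1 i).eq_or_lt with h | h
    · exact Or.inl (hy i h.symm)
    · exact Or.inr h
  have := hx.2 h1 h2 ⟨1 / 2, 1 / 2, by norm_num, by norm_num, by norm_num, by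
    module⟩
  have h0 : ε • y = 0 := by simpa using this
  exact (smul_eq_zero.1 h0).resolve_left hε.ne'

open Classical in
lemma Generic.card_active {v : Fin r → Fin n → ℤ} {a : Fin r → ℝ} (h : Generic v a)
    {x : Fin n → ℝ} (hx : x ∈ Set.extremePoints ℝ (Pa v a)) :
    (Finset.univ.filter fun i => dotv v i x = -a i).card = n := by
  set S := Finset.univ.filter fun i => dotv v i x = -a i with hS
  have hli := h S x fun i hi => (Finset.mem_filter.1 hi).2
  apply le_antisymm
  · simpa using hli.fintype_card_le_finrank
  · let L : (Fin n → ℝ) →ₗ[ℝ] (S → ℝ) := LinearMap.pi fun i => dotL v i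
    have hL : Function.Injective L := by
      rw [← LinearMap.ker_eq_bot, LinearMap.ker_eq_bot']
      intro y hy
      refine eq_zero_of_extreme hx fun i hi => ?_
      exact congrFun hy ⟨i, Finset.mem_filter.2 ⟨Finset.mem_univ _, hi⟩⟩
    simpa using LinearMap.finrank_le_finrank_of_injective hL

/-- If the parameters are multiples of all the nonzero minors, generic extreme points are
integral. -/
lemma Generic.integral_of_extreme {v : Fin r → Fin n → ℤ} {a : Fin r → ℝ} (h : Generic v a)
    {m : Fin r → ℤ} (ha : ∀ i, a i = ((detProd v * m i : ℤ) : ℝ)) {x : Fin n → ℝ}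
    (hx : x ∈ Set.extremePoints ℝ (Pa v a)) (j : Fin n) : ∃ k : ℤ, x j = k := by
  classical
  have hcard := h.card_active hx
  set S := Finset.univ.filter fun i => dotv v i x = -a i with hS
  have hli := h S x fun i hi => (Finset.mem_filter.1 hi).2
  let e : Fin n ≃ S := (S.equivFinOfCardEq hcard).symm
  let A : Matrix (Fin n) (Fin n) ℤ := Matrix.of fun k => v (e k)
  have hunit : IsUnit (A.map (Int.cast : ℤ → ℝ)) :=
    Matrix.linearIndependent_rows_iff_isUnit.1 (hli.comp e e.injective)
  have hA : A.det ≠ 0 := by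
    have h1 := ((Matrix.isUnit_iff_isUnit_det _).1 hunit).ne_zero
    have hdet : (A.map (Int.cast : ℤ → ℝ)).det = (A.det : ℝ) :=
      ((Int.castRingHom ℝ).map_det A).symm
    rw [hdet] at h1
    exact_mod_cast h1
  refine integral_of_mulVec hA (b := fun k => detProd v * -m (e k))
    (fun k => (det_dvd_detProd v (fun k => e k) hA).mul_right _) (fun k => ?_) j
  have : dotv v (e k) x = -a (e k) := (Finset.mem_filter.1 (e k).2).2
  rw [ha] at this
  push_cast at this ⊢
  rw [mul_neg, ← this]
  rfl

/-- The direction of the affine span of the `i`-th facet is the whole hyperplane orthogonal to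
`v_i`, since the facet is a neighbourhood of one of its points in that hyperplane. -/
lemma finrank_direction_facet {v : Fin r → Fin n → ℤ} {a : Fin r → ℝ} {i : Fin r}
    (hi : IsPrimitiveVec (v i)) {x : Fin n → ℝ} (hxi : dotv v i x = -a i)
    (hxj : ∀ j, i ≠ j → -a j < dotv v j x) :
    Module.finrank ℝ
      (affineSpan ℝ ({x | x ∈ Pa v a ∧ dotv v i x = -a i} : Set (Fin n → ℝ))).direction
      = n - 1 := by
  have hxP : x ∈ Pa v a := fun j => by
    by_cases hij : i = j
    · subst hij; exact hxi.ge
    · exact (hxj j hij).le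
  have hdir : (affineSpan ℝ ({x | x ∈ Pa v a ∧ dotv v i x = -a i} : Set (Fin n → ℝ))).direction
      = LinearMap.ker (dotL v i) := by
    rw [direction_affineSpan]
    apply le_antisymm
    · rw [vectorSpan, Submodule.span_le]
      rintro _ ⟨p, hp, q, hq, rfl⟩
      show dotL v i (p - q) = 0
      rw [map_sub, sub_eq_zero]
      exact hp.2.trans hq.2.symm
    · intro y hy
      have hy0 : dotv v i y = 0 := hy
      obtain ⟨ε, hε, h1, -⟩ := exists_perturb v a hxP (y := y) fun j => by
        by_cases hij : i = j
        · subst hij; exact Or.inl hy0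
        · exact Or.inr (hxj j hij)
      have hmem := vsub_mem_vectorSpan ℝ
        (s := {x | x ∈ Pa v a ∧ dotv v i x = -a i}) (p₁ := x + ε • y) (p₂ := x)
        ⟨h1, by rw [dotv_add, dotv_smul, hy0, mul_zero, add_zero, hxi]⟩ ⟨hxP, hxi⟩
      have h2 := Submodule.smul_mem _ ε⁻¹ hmem
      simpa [smul_smul, inv_mul_cancel₀ hε.ne'] using h2
  have hne : dotL v i ≠ 0 := fun h0 => by
    have h1 := dotv_self_pos hi
    have : dotv v i (realVec v i) = 0 := congrArg (fun φ => φ (realVec v i)) h0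
    linarith
  rw [hdir]
  have := Module.Dual.finrank_ker_add_one_of_ne_zero (f := dotL v i) hne
  simp at this
  omega

end Polytope

/-- there is `a₀ ∈ ℤ^r` such that `P_{a₀}` is an `n`-dimensional simple
lattice polytope with exactly `r` distinct facets. -/
theorem stmt3 {n r : ℕ} (hn : 1 ≤ n) (hr : 1 ≤ r)
    (v : Fin r → Fin n → ℤ) (hdist : Function.Injective v)
    (hprim : ∀ i, IsPrimitiveVec (v i)) (hspan : PosSpans v) :
    ∃ a₀ : Fin r → ℝ, (∀ i, ∃ m : ℤ, a₀ i = (m : ℝ)) ∧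
      -- (i) P_{a₀} is compact with nonempty interior
      IsCompact (Pa v a₀) ∧ (interior (Pa v a₀)).Nonempty ∧
      -- (ii) every extreme point lies in ℤ^n
      (∀ x ∈ Set.extremePoints ℝ (Pa v a₀), ∀ j, ∃ m : ℤ, x j = (m : ℝ)) ∧
      -- (iii) every extreme point saturates exactly n of the inequalities
      (∀ x ∈ Set.extremePoints ℝ (Pa v a₀),
        {i : Fin r | dotv v i x = -a₀ i}.ncard = n) ∧
      -- (iv) each facet F_i is nonempty of affine dimension n - 1, and the facets are distinct
      (∀ i : Fin r,
        ({x | x ∈ Pa v a₀ ∧ dotv v i x = -a₀ i} : Set (Fin n → ℝ)).Nonempty ∧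
        Module.finrank ℝ
          (affineSpan ℝ ({x | x ∈ Pa v a₀ ∧ dotv v i x = -a₀ i} : Set (Fin n → ℝ))).direction
          = n - 1) ∧
      (∀ i j : Fin r, i ≠ j →
        ({x | x ∈ Pa v a₀ ∧ dotv v i x = -a₀ i} : Set (Fin n → ℝ)) ≠
        ({x | x ∈ Pa v a₀ ∧ dotv v j x = -a₀ j} : Set (Fin n → ℝ))) := by
  obtain ⟨q, hadm, hgen⟩ := exists_rat_admissible_generic hdist hprim
  obtain ⟨N, hN, m, hm⟩ : ∃ N : ℕ, 0 < N ∧ ∃ m : Fin r → ℤ, ∀ i, (N : ℚ) * q i = m i := by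
    refine ⟨∏ i, (q i).den, Finset.prod_pos fun i _ => (q i).pos,
      fun i => (∏ k ∈ Finset.univ.erase i, (q k).den : ℕ) * (q i).num, fun i => ?_⟩
    rw [← Finset.prod_erase_mul _ _ (Finset.mem_univ i)]
    push_cast
    rw [mul_assoc, mul_comm ((q i).den : ℚ), Rat.mul_den_eq_num]
  -- `|detProd v|` keeps the scaling factor positive; the sign is moved into the integers.
  have hD : 0 < |detProd v| := abs_pos.2 (detProd_ne_zero v)
  have hc : (0 : ℝ) < (|detProd v| : ℤ) * N :=
    mul_pos (by exact_mod_cast hD) (by exact_mod_cast hN)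
  have hA := hadm.smul hc
  have hG := hgen.smul hc
  obtain ⟨s, hs⟩ : ∃ s : ℤ, |detProd v| = detProd v * s := (dvd_abs _ _).2 dvd_rfl
  have ha : ∀ i, (((|detProd v| : ℤ) * N : ℝ) • fun i => (q i : ℝ)) i
      = ((detProd v * (s * m i) : ℤ) : ℝ) := by
    intro i
    have h1 : (N : ℝ) * q i = m i := by exact_mod_cast hm i
    rw [← mul_assoc, ← hs, Int.cast_mul, ← h1, Pi.smul_apply, smul_eq_mul, mul_assoc]
  generalize ((|detProd v| : ℤ) * N : ℝ) • (fun i => (q i : ℝ)) = a at hA hG ha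
  have hfacet := hA.exists_facet_point hprim
  refine ⟨a, fun i => ⟨_, ha i⟩, isCompact_Pa hspan a, interior_nonempty_Pa v hA.1,
    fun x hx j => hG.integral_of_extreme ha hx j, fun x hx => ?_, fun i => ?_, fun i j hij => ?_⟩
  · classical
    refine Eq.trans ?_ (hG.card_active hx)
    rw [← Set.ncard_coe_finset]
    simp
  · obtain ⟨x, hxi, hxj⟩ := hfacet i
    refine ⟨⟨x, fun j => ?_, hxi⟩, finrank_direction_facet (hprim i) hxi hxj⟩
    by_cases h : i = j
    · subst h; exact hxi.ge
    · exact (hxj j h).le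
  · obtain ⟨x, hxi, hxj⟩ := hfacet i
    intro heq
    have hx : x ∈ ({x | x ∈ Pa v a ∧ dotv v i x = -a i} : Set (Fin n → ℝ)) := by
      refine ⟨fun j => ?_, hxi⟩
      by_cases h : i = j
      · subst h; exact hxi.ge
      · exact (hxj j h).le
    rw [heq] at hx
    exact (hxj j hij).ne' hx.2
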